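/- arXiv:2108.05295 — 3 statements merged into one kernel-verified Lean document; each statement's English description precedes it below -/
import Mathlib

section
/- Let B be a 2-connected finite simple graph containing a cycle of length ℓ with ℓ ≥ 9 and containing three mutually adjacent vertices x, y, z. Then there exists an integer ℓ' with 3ℓ' ≥ ℓ + 6 such that B contains a cycle of length ℓ' and a cycle of length ℓ' − 1. -/
/-- A finite simple graph is 2-connected if it has at least 3 vertices and
deleting any single vertex leaves it connected. -/
def TwoConnected {V : Type*} [Fintype V] (G : SimpleGraph V) : Prop :=
  3 ≤ Fintype.card V ∧ ∀ v : V, (G.induce ({v}ᶜ : Set V)).Connected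

/-!
Call a path joining two vertices of the triangle and avoiding the third a detour. Closing a detour
of length `k ≥ 2` by the edge between its ends, or by the two other edges, gives cycles of lengths
`k + 1` and `k + 2`, so a detour of length at least `ℓ / 3` suffices.

By 2-connectivity there are disjoint paths from two vertices of the triangle to the cycle `C`, and
after shortening one of them they avoid the third vertex, `z`. Their feet cut `C` into two arcs. If
`z` is not on `C`, both arcs extend to detours, and the longer has length at least `ℓ / 2`. If `z`
is on `C`, it cuts one of the arcs further, and each of the three resulting pieces extends to a
detour, joining the two triangle vertices whose paths end at its endpoints.
-/

open SimpleGraph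

section Walks

variable {V : Type*} {G : SimpleGraph V} {S : Set V} {u v w : V}

theorem isPath_append_of_forall_eq {p : G.Walk u v} {q : G.Walk v w} (hp : p.IsPath)
    (hq : q.IsPath) (h : ∀ t ∈ p.support, t ∈ q.support → t = v) : (p.append q).IsPath := by
  have hv : v ∉ q.support.tail ∧ q.support.tail.Nodup := by
    rw [← List.nodup_cons, Walk.cons_tail_support]
    exact hq.support_nodup
  rw [Walk.isPath_def, Walk.support_append, List.nodup_append']
  refine ⟨hp.support_nodup, hv.2, fun t htp htq => hv.1 ?_⟩
  exact h t htp (List.mem_of_mem_tail htq) ▸ htq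

theorem start_notMem_support_dropUntil [DecidableEq V] {p : G.Walk u v} (hp : p.IsPath)
    (hw : w ∈ p.support) (huw : u ≠ w) : u ∉ (p.dropUntil w hw).support := by
  rw [← p.take_spec hw] at hp
  exact fun hu => hp.ne_of_mem_support_of_append huw (Walk.start_mem_support _) hu rfl

theorem exists_takeUntil_support_first_mem [DecidableEq V] (p : G.Walk u v) (hv : v ∈ S) :
    ∃ a ∈ S, ∃ ha : a ∈ p.support, ∀ t ∈ (p.takeUntil a ha).support, t ∈ S → t = a := by
  classical
  obtain ⟨a, haS, ha, hfirst⟩ := p.exists_mem_support_forall_mem_support_imp_eq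
    {t ∈ p.support.toFinset | t ∈ S} ⟨v, by simp [hv]⟩
  simp only [Finset.mem_filter, List.mem_toFinset] at haS hfirst
  exact ⟨a, haS.2, ha, fun t ht htS =>
    hfirst t ⟨p.support_takeUntil_subset_support ha ht, htS⟩ ht⟩

theorem exists_walk_notMem_support (hG : (G.induce ({u}ᶜ : Set V)).Preconnected) (hv : v ≠ u)
    (hw : w ≠ u) : ∃ p : G.Walk v w, u ∉ p.support := by
  obtain ⟨p⟩ := hG ⟨v, hv⟩ ⟨w, hw⟩
  have hu : u ∉ (p.map (Embedding.induce _).toHom).support := by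
    rw [Walk.support_map, List.mem_map]
    rintro ⟨t, -, htu⟩
    exact t.2 htu
  exact ⟨_, hu⟩

theorem nontrivial_support_of_isCycle {c : G.Walk v v} (hc : c.IsCycle) :
    {t | t ∈ c.support}.Nontrivial :=
  ⟨v, c.start_mem_support, c.snd, c.getVert_mem_support 1, (c.adj_snd hc.not_nil).ne⟩

end Walks

section Linkages

variable {V : Type*} {G : SimpleGraph V} {S : Set V} {u v w x y z a b : V}

/-- `P` and `Q` are disjoint paths, each meeting `S` exactly in its last vertex. -/
structure IsLinkage (S : Set V) (P : G.Walk x a) (Q : G.Walk y b) : Prop where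
  isPath_left : P.IsPath
  isPath_right : Q.IsPath
  mem_iff_left : ∀ t ∈ P.support, t ∈ S ↔ t = a
  mem_iff_right : ∀ t ∈ Q.support, t ∈ S ↔ t = b
  disjoint : P.support.Disjoint Q.support

/-- The vertices `x` and `y` are the starting points of some linkage to `S`. -/
def Linked (G : SimpleGraph V) (S : Set V) (x y : V) : Prop :=
  ∃ (a b : V) (P : G.Walk x a) (Q : G.Walk y b), IsLinkage S P Q

namespace IsLinkage

variable {P : G.Walk x a} {Q : G.Walk y b}

theorem symm (h : IsLinkage S P Q) : IsLinkage S Q P where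
  isPath_left := h.isPath_right
  isPath_right := h.isPath_left
  mem_iff_left := h.mem_iff_right
  mem_iff_right := h.mem_iff_left
  disjoint := h.disjoint.symm

theorem end_mem_left (h : IsLinkage S P Q) : a ∈ S :=
  (h.mem_iff_left a P.end_mem_support).2 rfl

theorem ne_end (h : IsLinkage S P Q) : a ≠ b := by
  rintro rfl
  exact h.disjoint P.end_mem_support Q.end_mem_support

theorem start_notMem_right (h : IsLinkage S P Q) : x ∉ Q.support :=
  h.disjoint P.start_mem_support

theorem dropUntil_left [DecidableEq V] (h : IsLinkage S P Q) (hz : z ∈ P.support) :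
    IsLinkage S (P.dropUntil z hz) Q where
  isPath_left := h.isPath_left.dropUntil hz
  isPath_right := h.isPath_right
  mem_iff_left t ht := h.mem_iff_left t (P.support_dropUntil_subset_support hz ht)
  mem_iff_right := h.mem_iff_right
  disjoint _ ht := h.disjoint (P.support_dropUntil_subset_support hz ht)

theorem nil_right (h : IsLinkage S P Q) (hzS : z ∈ S) (hzP : z ∉ P.support) :
    IsLinkage S P (Walk.nil : G.Walk z z) where
  isPath_left := h.isPath_left
  isPath_right := Walk.IsPath.nil
  mem_iff_left := h.mem_iff_left
  mem_iff_right := by simpa using hzS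
  disjoint := by simpa using hzP

theorem isPath_append_append_reverse (h : IsLinkage S P Q) {A : G.Walk a b} (hA : A.IsPath)
    (hAS : ∀ t ∈ A.support, t ∈ S) : ((P.append A).append Q.reverse).IsPath := by
  have hPA : (P.append A).IsPath := isPath_append_of_forall_eq h.isPath_left hA
    fun t htP htA => (h.mem_iff_left t htP).1 (hAS t htA)
  refine isPath_append_of_forall_eq hPA h.isPath_right.reverse fun t htPA htQ => ?_
  rw [Walk.support_reverse, List.mem_reverse] at htQ
  rcases (Walk.mem_support_append_iff _ _).1 htPA with htP | htA
  · exact (h.disjoint htP htQ).elim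
  · exact (h.mem_iff_right t htQ).1 (hAS t htA)

end IsLinkage

namespace Linked

theorem symm (h : Linked G S x y) : Linked G S y x := by
  obtain ⟨a, b, P, Q, h⟩ := h
  exact ⟨b, a, Q, P, h.symm⟩

theorem of_disjoint_support {P : G.Walk x a} {Q : G.Walk y b} (ha : a ∈ S) (hb : b ∈ S)
    (h : P.support.Disjoint Q.support) : Linked G S x y := by
  classical
  obtain ⟨a', haS, ha', hfirst_a⟩ := exists_takeUntil_support_first_mem P ha
  obtain ⟨b', hbS, hb', hfirst_b⟩ := exists_takeUntil_support_first_mem Q hb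
  let P' := P.takeUntil a' ha'
  let Q' := Q.takeUntil b' hb'
  have hP' : P'.bypass.support ⊆ P'.support := P'.support_bypass_subset_support
  have hQ' : Q'.bypass.support ⊆ Q'.support := Q'.support_bypass_subset_support
  exact ⟨a', b', P'.bypass, Q'.bypass,
    { isPath_left := P'.bypass_isPath
      isPath_right := Q'.bypass_isPath
      mem_iff_left := fun t ht => ⟨hfirst_a t (hP' ht), fun hta => hta ▸ haS⟩
      mem_iff_right := fun t ht => ⟨hfirst_b t (hQ' ht), fun htb => htb ▸ hbS⟩
      disjoint := fun _ htP htQ => h (P.support_takeUntil_subset_support ha' (hP' htP))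
        (Q.support_takeUntil_subset_support hb' (hQ' htQ)) }⟩

/-- Follow a walk `R` from `w` to `S` avoiding `u` up to its first vertex `r` in `P ∪ Q ∪ S`. If `r`
is on `P`, continue along `P` and let `u` use the edge `uv` and `Q` instead; otherwise continue
along `Q`, if necessary, and let `u` keep `P`. -/
theorem of_adj (hG : (G.induce ({u}ᶜ : Set V)).Preconnected) (hS : S.Nontrivial)
    (huv : G.Adj u v) (h : Linked G S u v) (hwu : w ≠ u) : Linked G S w u := by
  classical
  obtain ⟨a, b, P, Q, h⟩ := h
  obtain ⟨s, hsS, hsu⟩ := hS.exists_ne u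
  obtain ⟨R, huR⟩ := exists_walk_notMem_support hG hwu hsu
  obtain ⟨r, hr, hrR, hfirst⟩ := exists_takeUntil_support_first_mem
    (S := {t | t ∈ P.support ∨ t ∈ Q.support ∨ t ∈ S}) R (Or.inr (Or.inr hsS))
  have hru : u ≠ r := fun hru => huR (hru ▸ hrR)
  have huR' : u ∉ (R.takeUntil r hrR).support := fun hu =>
    huR (R.support_takeUntil_subset_support hrR hu)
  have haS : a ∈ S := h.end_mem_left
  have hbS : b ∈ S := h.symm.end_mem_left
  by_cases hrP : r ∈ P.support
  · refine of_disjoint_support (P := (R.takeUntil r hrR).append (P.dropUntil r hrP))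
      (Q := Walk.cons huv Q) haS hbS fun t ht htQ => ?_
    rw [Walk.mem_support_append_iff] at ht
    rw [Walk.support_cons, List.mem_cons] at htQ
    rcases htQ with rfl | htQ
    · exact ht.elim huR' (start_notMem_support_dropUntil h.isPath_left hrP hru)
    rcases ht with htR | htP
    · exact h.disjoint hrP (hfirst t htR (Or.inr (Or.inl htQ)) ▸ htQ)
    · exact h.disjoint (P.support_dropUntil_subset_support hrP htP) htQ
  have hRP : (R.takeUntil r hrR).support.Disjoint P.support := fun t htR htP =>
    hrP (hfirst t htR (Or.inl htP) ▸ htP)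
  rcases hr.resolve_left hrP with hrQ | hrS
  · refine of_disjoint_support (P := (R.takeUntil r hrR).append (Q.dropUntil r hrQ)) (Q := P)
      hbS haS fun t ht htP => ?_
    rcases (Walk.mem_support_append_iff _ _).1 ht with htR | htQ
    · exact hRP htR htP
    · exact h.disjoint htP (Q.support_dropUntil_subset_support hrQ htQ)
  · exact of_disjoint_support hrS haS hRP

end Linked

theorem linked_of_walk (hG : ∀ v : V, (G.induce ({v}ᶜ : Set V)).Preconnected) (hS : S.Nontrivial)
    (p : G.Walk u a) (ha : a ∈ S) (hwu : w ≠ u) : Linked G S w u := by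
  induction p generalizing w with
  | @nil u =>
    obtain ⟨s, hsS, hsu⟩ := hS.exists_ne u
    obtain ⟨R, huR⟩ := exists_walk_notMem_support (hG u) hwu hsu
    exact Linked.of_disjoint_support (P := R) (Q := Walk.nil) hsS ha (by simpa using huR)
  | cons huv _ ih => exact Linked.of_adj (hG _) hS huv (ih ha huv.ne) hwu

theorem linked_of_preconnected_induce_compl
    (hG : ∀ v : V, (G.induce ({v}ᶜ : Set V)).Preconnected) (hS : S.Nontrivial) (hxy : x ≠ y) :
    Linked G S x y := by
  obtain ⟨s, hsS, hsx⟩ := hS.exists_ne x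
  obtain ⟨p, -⟩ := exists_walk_notMem_support (hG x) hxy.symm hsx
  exact linked_of_walk hG hS p hsS hxy

end Linkages

section Arcs

variable {V : Type*} {G : SimpleGraph V} {v a b : V}

/-- `A` and `A'` are the two arcs into which `a` and `b` cut the closed walk `c`, both of them
directed from `a` to `b`. -/
structure IsArcPair (c : G.Walk v v) (A A' : G.Walk a b) : Prop where
  isPath_left : A.IsPath
  isPath_right : A'.IsPath
  length_add_length : A.length + A'.length = c.length
  mem_support_iff : ∀ t, t ∈ c.support ↔ t ∈ A.support ∨ t ∈ A'.support
  eq_or_eq : ∀ t ∈ A.support, t ∈ A'.support → t = a ∨ t = b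

theorem IsArcPair.symm {c : G.Walk v v} {A A' : G.Walk a b} (h : IsArcPair c A A') :
    IsArcPair c A' A where
  isPath_left := h.isPath_right
  isPath_right := h.isPath_left
  length_add_length := by rw [add_comm, h.length_add_length]
  mem_support_iff t := by rw [h.mem_support_iff, or_comm]
  eq_or_eq t ht ht' := h.eq_or_eq t ht' ht

theorem IsArcPair.of_isCycle_append {p : G.Walk a b} {q : G.Walk b a} (hab : a ≠ b)
    (hc : (p.append q).IsCycle) : IsArcPair (p.append q) p q.reverse where
  isPath_left := hc.isPath_of_append_left (Walk.not_nil_of_ne hab.symm)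
  isPath_right := (hc.isPath_of_append_right (Walk.not_nil_of_ne hab)).reverse
  length_add_length := by simp
  mem_support_iff := by simp
  eq_or_eq t htp htq := by
    have hdisj : p.support.tail.Disjoint q.support.tail := by
      have hnodup := hc.support_nodup
      rw [Walk.tail_support_append] at hnodup
      exact List.disjoint_of_nodup_append hnodup
    rw [Walk.support_reverse, List.mem_reverse] at htq
    rw [Walk.mem_support_iff] at htp htq
    exact htp.imp_right fun htp => htq.resolve_right (hdisj htp)

theorem exists_isArcPair {c : G.Walk v v} (hc : c.IsCycle) (ha : a ∈ c.support)
    (hb : b ∈ c.support) (hab : a ≠ b) : ∃ A A' : G.Walk a b, IsArcPair c A A' := by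
  classical
  have hb' : b ∈ (c.rotate a ha).support := by rwa [Walk.mem_support_rotate_iff]
  have hspec := (c.rotate a ha).take_spec hb'
  have h := IsArcPair.of_isCycle_append hab (hspec.symm ▸ hc.rotate ha)
  rw [hspec] at h
  exact ⟨_, _, h.isPath_left, h.isPath_right,
    h.length_add_length.trans (c.length_rotate a ha),
    fun t => by rw [← h.mem_support_iff, Walk.mem_support_rotate_iff], h.eq_or_eq⟩

end Arcs

section ConsecutiveCycles

variable {V : Type*} {G : SimpleGraph V} {S : Set V} {v x y z a b : V} {n : ℕ}

/-- For some `k ≥ n`, the graph has cycles of both lengths `k + 1` and `k + 2`. The shift by one is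
chosen so that `k` is the length of a path closed up through a triangle. -/
def HasConsecutiveCycles (G : SimpleGraph V) (n : ℕ) : Prop :=
  ∃ k, n ≤ k ∧ (∃ (v : V) (c : G.Walk v v), c.IsCycle ∧ c.length = k + 1) ∧
    ∃ (v : V) (c : G.Walk v v), c.IsCycle ∧ c.length = k + 2

theorem hasConsecutiveCycles_of_isPath_of_notMem (hxy : G.Adj x y) (hyz : G.Adj y z)
    (hxz : G.Adj x z) {W : G.Walk x y} (hW : W.IsPath) (hz : z ∉ W.support) (hn : 2 ≤ n)
    (hnW : n ≤ W.length) : HasConsecutiveCycles G n := by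
  refine ⟨W.length, hnW, ⟨y, Walk.cons hxy.symm W, ?_, by simp⟩,
    ⟨y, Walk.cons hyz (Walk.cons hxz.symm W), ?_, by simp⟩⟩ <;>
    rw [Walk.isCycle_iff_isPath_tail_and_le_length]
  · exact ⟨by simpa using hW, by simp only [Walk.length_cons]; omega⟩
  · exact ⟨by simpa using ⟨hW, hz⟩, by simp only [Walk.length_cons]; omega⟩

namespace IsLinkage

variable {P : G.Walk x a} {Q : G.Walk y b}

theorem hasConsecutiveCycles_of_isPath (h : IsLinkage S P Q) (hxy : G.Adj x y) (hyz : G.Adj y z)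
    (hxz : G.Adj x z) {A : G.Walk a b} (hA : A.IsPath) (hAS : ∀ t ∈ A.support, t ∈ S)
    (hzP : z ∉ P.support) (hzQ : z ∉ Q.support) (hzA : z ∉ A.support) (hn : 2 ≤ n)
    (hnA : n ≤ A.length) : HasConsecutiveCycles G n := by
  refine hasConsecutiveCycles_of_isPath_of_notMem hxy hyz hxz
    (h.isPath_append_append_reverse hA hAS) ?_ hn ?_
  · simp [hzP, hzA, hzQ]
  · simp only [Walk.length_append, Walk.length_reverse]
    omega

theorem hasConsecutiveCycles_of_isPath_to_third (h : IsLinkage S P Q) (hxy : G.Adj x y)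
    (hyz : G.Adj y z) (hxz : G.Adj x z) {A : G.Walk a z} (hA : A.IsPath)
    (hAS : ∀ t ∈ A.support, t ∈ S) (hbA : b ∉ A.support) (hzP : z ∉ P.support) (hn : 2 ≤ n)
    (hnA : n ≤ A.length) : HasConsecutiveCycles G n := by
  have hyA : y ∉ A.support := fun hyA =>
    hbA ((h.mem_iff_right y Q.start_mem_support).1 (hAS y hyA) ▸ hyA)
  exact (h.nil_right (hAS z A.end_mem_support) hzP).hasConsecutiveCycles_of_isPath hxz hyz.symm hxy
    hA hAS h.symm.start_notMem_right (by simpa using hyz.ne) hyA hn hnA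

theorem hasConsecutiveCycles_of_mem_arc {c : G.Walk v v} {A A' : G.Walk a b}
    (h : IsLinkage {t | t ∈ c.support} P Q) (harcs : IsArcPair c A A') (hxy : G.Adj x y)
    (hyz : G.Adj y z) (hxz : G.Adj x z) (hzP : z ∉ P.support) (hzQ : z ∉ Q.support)
    (hzA : z ∈ A.support) (hn : 2 ≤ n) (hnc : 3 * n ≤ c.length + 2) :
    HasConsecutiveCycles G n := by
  have hza : z ≠ a := fun hza => hzP (hza ▸ P.end_mem_support)
  have hzb : z ≠ b := fun hzb => hzQ (hzb ▸ Q.end_mem_support)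
  obtain ⟨A₁, A₂, hA₁, hA₂, rfl⟩ := harcs.isPath_left.mem_support_iff_exists_append.1 hzA
  have hbA₁ : b ∉ A₁.support := fun hb =>
    harcs.isPath_left.ne_of_mem_support_of_append hzb.symm hb A₂.end_mem_support rfl
  have haA₂ : a ∉ A₂.support := fun ha =>
    harcs.isPath_left.ne_of_mem_support_of_append hza.symm A₁.start_mem_support ha rfl
  have hsub₁ : ∀ t ∈ A₁.support, t ∈ c.support := fun t ht =>
    (harcs.mem_support_iff t).2 (Or.inl ((Walk.mem_support_append_iff _ _).2 (Or.inl ht)))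
  have hsub₂ : ∀ t ∈ A₂.support, t ∈ c.support := fun t ht =>
    (harcs.mem_support_iff t).2 (Or.inl ((Walk.mem_support_append_iff _ _).2 (Or.inr ht)))
  have hsub' : ∀ t ∈ A'.support, t ∈ c.support := fun t ht =>
    (harcs.mem_support_iff t).2 (Or.inr ht)
  have hlength := harcs.length_add_length
  rw [Walk.length_append] at hlength
  obtain hn₁ | hn₂ | hn' : n ≤ A₁.length ∨ n ≤ A₂.length ∨ n ≤ A'.length := by omega
  · exact h.hasConsecutiveCycles_of_isPath_to_third hxy hyz hxz hA₁ hsub₁ hbA₁ hzP hn hn₁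
  · exact h.symm.hasConsecutiveCycles_of_isPath_to_third hxy.symm hxz hyz hA₂.reverse
      (by simpa using hsub₂) (by simpa using haA₂) hzQ hn (by simpa using hn₂)
  · have hzA' : z ∉ A'.support := fun hzA' => (harcs.eq_or_eq z hzA hzA').elim hza hzb
    exact h.hasConsecutiveCycles_of_isPath hxy hyz hxz harcs.isPath_right hsub' hzP hzQ hzA' hn hn'

theorem hasConsecutiveCycles {c : G.Walk v v} (h : IsLinkage {t | t ∈ c.support} P Q)
    (hc : c.IsCycle) (hxy : G.Adj x y) (hyz : G.Adj y z) (hxz : G.Adj x z) (hzP : z ∉ P.support)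
    (hzQ : z ∉ Q.support) (hn : 2 ≤ n) (hnc : 3 * n ≤ c.length + 2) :
    HasConsecutiveCycles G n := by
  obtain ⟨A, A', harcs⟩ := exists_isArcPair hc h.end_mem_left h.symm.end_mem_left h.ne_end
  by_cases hzA : z ∈ A.support
  · exact h.hasConsecutiveCycles_of_mem_arc harcs hxy hyz hxz hzP hzQ hzA hn hnc
  by_cases hzA' : z ∈ A'.support
  · exact h.hasConsecutiveCycles_of_mem_arc harcs.symm hxy hyz hxz hzP hzQ hzA' hn hnc
  wlog hle : A'.length ≤ A.length generalizing A A'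
  · exact this A' A harcs.symm hzA' hzA (by omega)
  have hlength := harcs.length_add_length
  exact h.hasConsecutiveCycles_of_isPath hxy hyz hxz harcs.isPath_left
    (fun t ht => (harcs.mem_support_iff t).2 (Or.inl ht)) hzP hzQ hzA hn (by omega)

end IsLinkage

theorem Linked.hasConsecutiveCycles {c : G.Walk v v} (h : Linked G {t | t ∈ c.support} x y)
    (hc : c.IsCycle) (hxy : G.Adj x y) (hyz : G.Adj y z) (hxz : G.Adj x z) (hn : 2 ≤ n)
    (hnc : 3 * n ≤ c.length + 2) : HasConsecutiveCycles G n := by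
  classical
  obtain ⟨a, b, P, Q, h⟩ := h
  by_cases hzP : z ∈ P.support
  · exact (h.dropUntil_left hzP).hasConsecutiveCycles hc hyz.symm hxy.symm hxz.symm
      (start_notMem_support_dropUntil h.isPath_left hzP hxz.ne) h.start_notMem_right hn hnc
  by_cases hzQ : z ∈ Q.support
  · exact (h.symm.dropUntil_left hzQ).hasConsecutiveCycles hc hxz.symm hxy hyz.symm
      (start_notMem_support_dropUntil h.isPath_right hzQ hyz.ne) h.symm.start_notMem_right hn hnc
  exact h.hasConsecutiveCycles hc hxy hyz hxz hzP hzQ hn hnc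

end ConsecutiveCycles

theorem stmt_1_general {V : Type*} (B : SimpleGraph V)
    (hB : ∀ v : V, (B.induce ({v}ᶜ : Set V)).Preconnected) {ℓ : ℕ} (hℓ : 4 ≤ ℓ)
    (hcyc : ∃ (v : V) (c : B.Walk v v), c.IsCycle ∧ c.length = ℓ)
    {x y z : V} (hxy : B.Adj x y) (hyz : B.Adj y z) (hxz : B.Adj x z) :
    ∃ ℓ' : ℕ, ℓ + 6 ≤ 3 * ℓ' ∧
      (∃ (v : V) (c : B.Walk v v), c.IsCycle ∧ c.length = ℓ') ∧
      (∃ (v : V) (c : B.Walk v v), c.IsCycle ∧ c.length = ℓ' - 1) := by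
  obtain ⟨v, c, hc, rfl⟩ := hcyc
  have hlinked : Linked B {t | t ∈ c.support} x y :=
    linked_of_preconnected_induce_compl hB (nontrivial_support_of_isCycle hc) hxy.ne
  obtain ⟨k, hk, hshort, hlong⟩ := hlinked.hasConsecutiveCycles (n := (c.length + 2) / 3) hc
    hxy hyz hxz (by omega) (by omega)
  exact ⟨k + 2, by omega, hlong, hshort⟩

theorem stmt_1 {V : Type*} [Fintype V] (B : SimpleGraph V)
    (hB : TwoConnected B) {ℓ : ℕ} (hℓ : 9 ≤ ℓ)
    (hcyc : ∃ (v : V) (c : B.Walk v v), c.IsCycle ∧ c.length = ℓ)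
    {x y z : V} (hxy : B.Adj x y) (hyz : B.Adj y z) (hxz : B.Adj x z) :
    ∃ ℓ' : ℕ, ℓ + 6 ≤ 3 * ℓ' ∧
      (∃ (v : V) (c : B.Walk v v), c.IsCycle ∧ c.length = ℓ') ∧
      (∃ (v : V) (c : B.Walk v v), c.IsCycle ∧ c.length = ℓ' - 1) :=
  stmt_1_general B (fun v => (hB.2 v).preconnected) (by omega) hcyc hxy hyz hxz
end

section
/- Let k ≥ 5 be an integer and let G be a 2-connected finite simple graph with distinct vertices h and u such that h is adjacent to every vertex of G other than h and u, and h is not adjacent to u. If G contains no cycle of length exactly k, then G contains no h-avoiding path of length k − 2. -/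
/-!
An `h`-avoiding path whose two ends are neighbours of `h` closes up through `h` to a cycle that is
two edges longer. If `u` is not adjacent to `h`, a path that starts at `u` is first replaced by one
of the same length whose ends are not `u`, using a neighbour `w` of `u` other than the second vertex
of the path: if `w` lies off the path, prepend `w` and drop the last vertex; if `w` lies on the
path, perform a Pósa rotation along `uw`. The only vertex this can add is a neighbour of `u`, so the
new path still avoids `h`.
-/

section

open SimpleGraph

theorem TwoConnected.exists_ne_adj {V : Type*} [Fintype V] {G : SimpleGraph V}
    (hG : TwoConnected G) {v x : V} (hvx : v ≠ x) : ∃ w, w ≠ x ∧ G.Adj v w := by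
  obtain ⟨y, hyv, hyx⟩ : ∃ y, y ≠ v ∧ y ≠ x := by
    classical
    obtain ⟨y, -, hy⟩ := Finset.exists_mem_notMem_of_card_lt_card
      ((Finset.card_le_two (a := v) (b := x)).trans_lt hG.1)
    exact ⟨y, by simpa using hy⟩
  have : Nontrivial ({x}ᶜ : Set V) := ⟨⟨y, hyx⟩, ⟨v, hvx⟩, fun e ↦ hyv congr($e)⟩
  obtain ⟨w, hw⟩ := (hG.2 x).preconnected.exists_adj_of_nontrivial ⟨v, hvx⟩
  exact ⟨w, w.2, hw⟩

theorem TwoConnected.nontrivial_neighborSet {V : Type*} [Fintype V] {G : SimpleGraph V}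
    (hG : TwoConnected G) (v : V) : (G.neighborSet v).Nontrivial := by
  have : Nontrivial V := Fintype.one_lt_card_iff_nontrivial.1 (by have := hG.1; omega)
  obtain ⟨x, hx⟩ := exists_ne v
  obtain ⟨w, -, hw⟩ := hG.exists_ne_adj hx.symm
  obtain ⟨w', hne, hw'⟩ := hG.exists_ne_adj hw.ne
  exact ⟨w', hw', w, hw, hne⟩

variable {V : Type*} {G : SimpleGraph V} {a b h u w : V}

theorem isCycle_cons_concat {p : G.Walk a b} (hp : p.IsPath) (hab : a ≠ b) (hh : h ∉ p.support)
    (ha : G.Adj h a) (hb : G.Adj b h) : (Walk.cons ha (p.concat hb)).IsCycle := by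
  have hlen : p.length ≠ 0 := fun h0 ↦ hab (Walk.eq_of_length_eq_zero h0)
  rw [Walk.concat_eq_append, ← Walk.cons_append]
  refine (hp.cons hh).isCycle_append (Walk.IsPath.nil.cons (by simpa using hb.ne)) ?_ ?_
  · simpa using hh
  · left
    rw [Walk.length_cons]
    omega

/-- The Pósa rotation of the path `p = v₀ v₁ … vₗ` along a chord from `v₀` to `vᵢ₊₁`, namely the
path `vᵢ … v₁ v₀ vᵢ₊₁ … vₗ`, which has a new start and the same vertices. It is defined for all
`i`, but has this meaning only for `i < p.length`, as `getVert` stays at `vₗ` afterwards. -/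
def posaRotation (p : G.Walk u b) (i : ℕ) (hadj : G.Adj u (p.getVert (i + 1))) :
    G.Walk (p.getVert i) b :=
  (p.take i).reverse.append (Walk.cons hadj (p.drop (i + 1)))

section PosaRotation

variable {p : G.Walk u b} {i : ℕ} (hi : i < p.length) (hadj : G.Adj u (p.getVert (i + 1)))
include hi

theorem length_posaRotation : (posaRotation p i hadj).length = p.length := by
  simp only [posaRotation, Walk.length_append, Walk.length_reverse, Walk.take_length,
    Walk.length_cons, Walk.drop_length]
  omega

theorem support_posaRotation_perm : (posaRotation p i hadj).support.Perm p.support := by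
  calc (posaRotation p i hadj).support
      = (p.support.take (i + 1)).reverse ++ p.support.drop (i + 1) := by
        simp [posaRotation, Walk.support_append, Walk.support_take, Nat.min_eq_left hi]
    _ |>.Perm (p.support.take (i + 1) ++ p.support.drop (i + 1)) :=
        (List.reverse_perm _).append_right _
    _ = p.support := List.take_append_drop _ _

theorem isPath_posaRotation (hp : p.IsPath) : (posaRotation p i hadj).IsPath :=
  .mk' ((support_posaRotation_perm hi hadj).nodup_iff.2 hp.support_nodup)

end PosaRotation

theorem exists_isPath_ends_ne_of_mem_support {p : G.Walk u b} (hp : p.IsPath)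
    (hw : w ∈ p.support) (huw : G.Adj u w) (hsnd : w ≠ p.snd) :
    ∃ (a' b' : V) (q : G.Walk a' b'), q.IsPath ∧ q.length = p.length ∧ a' ≠ u ∧ b' ≠ u ∧
      q.support ⊆ p.support := by
  obtain ⟨n, rfl, hn⟩ := Walk.mem_support_iff_exists_getVert.1 hw
  have hn0 : n ≠ 0 := by
    rintro rfl
    exact huw.ne p.getVert_zero.symm
  have hn1 : n ≠ 1 := by
    rintro rfl
    exact hsnd rfl
  obtain ⟨i, rfl⟩ := Nat.exists_eq_add_one_of_ne_zero hn0
  refine ⟨_, b, posaRotation p i huw, isPath_posaRotation hn huw hp, length_posaRotation hn huw,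
    ?_, ?_, (support_posaRotation_perm hn huw).subset⟩
  · rw [ne_eq, hp.getVert_eq_start_iff (by omega)]
    omega
  · rw [← p.getVert_length, ne_eq, hp.getVert_eq_start_iff le_rfl]
    omega

theorem exists_isPath_ends_ne_of_notMem_support {p : G.Walk u b} (hp : p.IsPath)
    (hlen : 2 ≤ p.length) (hw : w ∉ p.support) (huw : G.Adj u w) :
    ∃ (a' b' : V) (q : G.Walk a' b'), q.IsPath ∧ q.length = p.length ∧ a' ≠ u ∧ b' ≠ u ∧
      q.support ⊆ w :: p.support := by
  have hnil : ¬p.Nil := by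
    rw [← Walk.length_eq_zero_iff]
    omega
  have hsub : p.dropLast.support ⊆ p.support := by
    rw [Walk.support_dropLast hnil]
    exact List.dropLast_subset _
  refine ⟨w, p.penultimate, Walk.cons huw.symm p.dropLast,
    hp.dropLast.cons fun hmem ↦ hw (hsub hmem), ?_, huw.ne.symm, ?_, List.cons_subset_cons w hsub⟩
  · rw [Walk.length_cons, Walk.length_dropLast_add_one hnil]
  · rw [Walk.penultimate, ne_eq, hp.getVert_eq_start_iff (by omega)]
    omega

theorem exists_isPath_ends_ne_of_start {p : G.Walk u b} (hp : p.IsPath) (hlen : 2 ≤ p.length)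
    (hu : (G.neighborSet u).Nontrivial) :
    ∃ (a' b' : V) (q : G.Walk a' b'), q.IsPath ∧ q.length = p.length ∧ a' ≠ u ∧ b' ≠ u ∧
      ∀ x ∈ q.support, x ∈ p.support ∨ G.Adj u x := by
  obtain ⟨w, huw, hsnd⟩ := hu.exists_ne p.snd
  by_cases hw : w ∈ p.support
  · obtain ⟨a', b', q, hq, hql, ha', hb', hsub⟩ :=
      exists_isPath_ends_ne_of_mem_support hp hw huw hsnd
    exact ⟨a', b', q, hq, hql, ha', hb', fun x hx ↦ .inl (hsub hx)⟩
  · obtain ⟨a', b', q, hq, hql, ha', hb', hsub⟩ :=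
      exists_isPath_ends_ne_of_notMem_support hp hlen hw huw
    refine ⟨a', b', q, hq, hql, ha', hb', fun x hx ↦ ?_⟩
    obtain rfl | hx := List.mem_cons.1 (hsub hx)
    exacts [.inr huw, .inl hx]

theorem exists_isPath_ends_ne {p : G.Walk a b} (hp : p.IsPath) (hlen : 2 ≤ p.length)
    (hu : (G.neighborSet u).Nontrivial) :
    ∃ (a' b' : V) (q : G.Walk a' b'), q.IsPath ∧ q.length = p.length ∧ a' ≠ u ∧ b' ≠ u ∧
      ∀ x ∈ q.support, x ∈ p.support ∨ G.Adj u x := by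
  obtain rfl | ha := eq_or_ne a u
  · exact exists_isPath_ends_ne_of_start hp hlen hu
  obtain rfl | hb := eq_or_ne b u
  · simpa using exists_isPath_ends_ne_of_start hp.reverse (by simpa using hlen) hu
  · exact ⟨a, b, p, hp, rfl, ha, hb, fun x hx ↦ .inl hx⟩

theorem exists_isPath_adj_ends (hu : (G.neighborSet u).Nontrivial)
    (hdom : ∀ v, v ≠ h → v ≠ u → G.Adj h v) {p : G.Walk a b} (hp : p.IsPath)
    (hh : h ∉ p.support) (hlen : 2 ≤ p.length) :
    ∃ (a' b' : V) (q : G.Walk a' b'), q.IsPath ∧ h ∉ q.support ∧ q.length = p.length ∧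
      G.Adj h a' ∧ G.Adj h b' := by
  by_cases hadj : G.Adj h u
  · have hall : ∀ v ∈ p.support, G.Adj h v := fun v hv ↦ by
      obtain rfl | hvu := eq_or_ne v u
      exacts [hadj, hdom v (ne_of_mem_of_not_mem hv hh) hvu]
    exact ⟨a, b, p, hp, hh, rfl, hall a p.start_mem_support, hall b p.end_mem_support⟩
  · obtain ⟨a', b', q, hq, hql, ha', hb', hsub⟩ := exists_isPath_ends_ne hp hlen hu
    have hhq : h ∉ q.support := fun hmem ↦ (hsub h hmem).elim hh fun huh ↦ hadj huh.symm
    exact ⟨a', b', q, hq, hhq, hql,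
      hdom a' (ne_of_mem_of_not_mem q.start_mem_support hhq) ha',
      hdom b' (ne_of_mem_of_not_mem q.end_mem_support hhq) hb'⟩

end

theorem stmt_6_general {V : Type*} (G : SimpleGraph V) {k : ℕ} (hk : 4 ≤ k) {h u : V}
    (hu : (G.neighborSet u).Nontrivial) (hdom : ∀ v : V, v ≠ h → v ≠ u → G.Adj h v)
    (hnocyc : ¬ ∃ (v : V) (c : G.Walk v v), c.IsCycle ∧ c.length = k) :
    ¬ ∃ (a b : V) (p : G.Walk a b), p.IsPath ∧ h ∉ p.support ∧ p.length = k - 2 := by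
  rintro ⟨a, b, p, hp, hh, hlen⟩
  obtain ⟨a', b', q, hq, hhq, hql, ha', hb'⟩ := exists_isPath_adj_ends hu hdom hp hh (by omega)
  have hne : a' ≠ b' := by
    rw [ne_eq, ← hq.nil_iff_eq, ← SimpleGraph.Walk.length_eq_zero_iff]
    omega
  refine hnocyc ⟨h, _, isCycle_cons_concat hq hne hhq ha' hb'.symm, ?_⟩
  rw [SimpleGraph.Walk.length_cons, SimpleGraph.Walk.length_concat]
  omega

theorem stmt_6 {V : Type*} [Fintype V] (G : SimpleGraph V)
    (hG : TwoConnected G) {k : ℕ} (hk : 5 ≤ k)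
    {h u : V} (hhu : h ≠ u)
    (hdom : ∀ v : V, v ≠ h → v ≠ u → G.Adj h v) (hnadj : ¬ G.Adj h u)
    (hnocyc : ¬ ∃ (v : V) (c : G.Walk v v), c.IsCycle ∧ c.length = k) :
    ¬ ∃ (a b : V) (p : G.Walk a b), p.IsPath ∧ h ∉ p.support ∧ p.length = k - 2 :=
  stmt_6_general G (by omega) (hG.nontrivial_neighborSet u) hdom hnocyc
end

section
/- Let k ≥ 3 be an integer and let G be a finite simple graph with a dominating vertex r. If G contains a cycle of length ℓ for some ℓ ≥ k, then G contains a cycle of length exactly k. -/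
/-!
Deleting `r` from the cycle leaves a path on at least `k - 1` vertices that avoids `r`: cut the
cycle open at `r`, or anywhere if `r` does not lie on it. Any subpath with `k - 1` vertices closes
up through `r` to a cycle of length `k`, as `r` is adjacent to both of its ends.
-/

section PathsAndCycles

open SimpleGraph Walk

variable {V : Type*} {G : SimpleGraph V} {r u v w : V}

theorem isCycle_cons_concat_s7 {p : G.Walk u v} (hp : p.IsPath) (hw : w ∉ p.support)
    (hnil : ¬p.Nil) (hwu : G.Adj w u) (hvw : G.Adj v w) :
    (cons hwu (p.concat hvw)).IsCycle := by
  have hlen : 0 < p.length := not_nil_iff_lt_length.mp hnil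
  refine isCycle_iff_isPath_tail_and_le_length.mpr ⟨?_, ?_⟩
  · simpa using hp.concat hw hvw
  · simp only [length_cons, length_concat]
    lia

theorem end_notMem_support_dropLast {p : G.Walk u v} (hp : p.IsPath) (hnil : ¬p.Nil) :
    v ∉ p.dropLast.support := by
  have hadj := adj_penultimate hnil
  rw [← concat_dropLast hadj, concat_isPath_iff] at hp
  exact hp.2

theorem base_notMem_support_tail_dropLast {c : G.Walk v v} (hc : c.IsCycle) :
    v ∉ c.tail.dropLast.support := by
  refine end_notMem_support_dropLast hc.isPath_tail ?_
  have := hc.three_le_length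
  rw [not_nil_iff_lt_length, length_tail]
  lia

theorem support_tail_dropLast_subset (p : G.Walk u v) :
    p.tail.dropLast.support ⊆ p.support :=
  ((isSubwalk_take _ _).trans (isSubwalk_drop p 1)).support_subset

theorem exists_isPath_avoiding_of_isCycle {c : G.Walk v v} (hc : c.IsCycle) (r : V) :
    ∃ (a b : V) (p : G.Walk a b), p.IsPath ∧ p.support ⊆ c.support ∧ r ∉ p.support ∧
      p.length = c.length - 2 := by
  classical
  by_cases hr : r ∈ c.support
  · have hc' : (c.rotate r hr).IsCycle := (isCycle_rotate hr).mpr hc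
    refine ⟨_, _, (c.rotate r hr).tail.dropLast, hc'.isPath_tail.dropLast, fun x hx => ?_,
      base_notMem_support_tail_dropLast hc', ?_⟩
    · exact (mem_support_rotate_iff c r hr).mp (support_tail_dropLast_subset _ hx)
    · rw [length_dropLast, length_tail, length_rotate, Nat.sub_sub]
  · have hsub := support_tail_dropLast_subset c
    refine ⟨_, _, c.tail.dropLast, hc.isPath_tail.dropLast, hsub, fun h => hr (hsub h), ?_⟩
    rw [length_dropLast, length_tail, Nat.sub_sub]

theorem stmt_7_general {c : G.Walk v v} (hc : c.IsCycle)
    (hr : ∀ x ∈ c.support, x ≠ r → G.Adj r x) {k : ℕ} (hk : 3 ≤ k) (hkc : k ≤ c.length) :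
    ∃ d : G.Walk r r, d.IsCycle ∧ d.length = k := by
  obtain ⟨a, b, p, hp, hpc, hrp, hlen⟩ := exists_isPath_avoiding_of_isCycle hc r
  let q := p.take (k - 2)
  have hq_len : q.length = k - 2 := by
    rw [take_length, hlen]
    lia
  have hqp : q.support ⊆ p.support := (isSubwalk_take p _).support_subset
  have hrq : r ∉ q.support := fun h => hrp (hqp h)
  have hadj : ∀ x ∈ q.support, G.Adj r x := fun x hx =>
    hr x (hpc (hqp hx)) (ne_of_mem_of_not_mem hx hrq)
  have hq_nil : ¬q.Nil := by
    rw [not_nil_iff_lt_length]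
    lia
  refine ⟨_, isCycle_cons_concat_s7 (hp.take _) hrq hq_nil
    (hadj _ q.start_mem_support) (hadj _ q.end_mem_support).symm, ?_⟩
  rw [length_cons, length_concat, hq_len]
  lia

end PathsAndCycles

theorem stmt_7 {V : Type*} [Fintype V] (G : SimpleGraph V)
    {k : ℕ} (hk : 3 ≤ k)
    {r : V} (hr : ∀ v : V, v ≠ r → G.Adj r v)
    {ℓ : ℕ} (hℓ : k ≤ ℓ)
    (hcyc : ∃ (v : V) (c : G.Walk v v), c.IsCycle ∧ c.length = ℓ) :
    ∃ (v : V) (c : G.Walk v v), c.IsCycle ∧ c.length = k := by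
  obtain ⟨v, c, hc, rfl⟩ := hcyc
  exact ⟨r, stmt_7_general hc (fun x _ => hr x) hk hℓ⟩
end
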